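/- For every unicyclic graph G on n vertices that is not a cycle-star graph, there exists a cycle-star graph G′ on n vertices with H_A(G) < H_A(G′). -/

import Mathlib

open Finset SimpleGraph

/-- Degree of a vertex (number of neighbors). -/
noncomputable def deg {V : Type*} [Fintype V] (G : SimpleGraph V) (v : V) : ℕ :=
  Nat.card {w // G.Adj v w}

open scoped Classical in
/-- Additively weighted Harary index: sum over unordered pairs of distinct
vertices of (deg u + deg v) / d(u,v). -/
noncomputable def HA {V : Type*} [Fintype V] (G : SimpleGraph V) : ℝ :=
  (1/2) * ∑ u : V, ∑ v : V, if u = v then 0 else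
    ((deg G u + deg G v : ℕ) : ℝ) / (G.dist u v)

/-- A unicyclic graph: connected with as many edges as vertices. -/
def Unicyclic {V : Type*} [Fintype V] (G : SimpleGraph V) : Prop :=
  G.Connected ∧ Nat.card G.edgeSet = Fintype.card V

/-- k-th harmonicNum number. -/
noncomputable def harmonicNum (k : ℕ) : ℝ := ∑ i ∈ Finset.range k, (1 : ℝ) / (i + 1)

/-- CS_{3,n-3}: a triangle on vertices 0,1,2 with n-3 leaves attached to vertex 0. -/
def cycleStar3 (n : ℕ) : SimpleGraph (Fin n) :=
  SimpleGraph.fromRel (fun i j => ((i : ℕ) < 3 ∧ (j : ℕ) < 3) ∨ ((i : ℕ) = 0 ∧ 3 ≤ (j : ℕ)))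

/-- CP_{k,n-k}: cycle 0,...,k-1 with the path k,k+1,...,n-1 attached to vertex 0
(for k = n this is just the cycle C_n). -/
def cyclePath (n k : ℕ) : SimpleGraph (Fin n) :=
  SimpleGraph.fromRel (fun i j =>
    ((i : ℕ) < k ∧ (j : ℕ) < k ∧ ((j : ℕ) = (i : ℕ) + 1 ∨ ((i : ℕ) = 0 ∧ (j : ℕ) = k - 1)))
    ∨ ((i : ℕ) = 0 ∧ (j : ℕ) = k)
    ∨ (k ≤ (i : ℕ) ∧ (j : ℕ) = (i : ℕ) + 1))

/-- A vertex lies on a cycle of G. -/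
def OnCycle {V : Type*} (G : SimpleGraph V) (v : V) : Prop :=
  ∃ p : G.Walk v v, p.IsCycle

/-- Cycle-star graph: unicyclic, and every vertex of degree ≥ 2 lies on the cycle
(equivalently, every non-cycle vertex is a leaf attached to a cycle vertex). -/
def IsCycleStar {V : Type*} [Fintype V] (G : SimpleGraph V) : Prop :=
  Unicyclic G ∧ ∀ v, 2 ≤ deg G v → OnCycle G v

/-- Cycle-path graph: unicyclic, cycle vertices have degree ≤ 3 and non-cycle
vertices have degree ≤ 2 (at most one pendant path per cycle vertex). -/
def IsCyclePath {V : Type*} [Fintype V] (G : SimpleGraph V) : Prop :=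
  Unicyclic G ∧ ∀ v, (OnCycle G v → deg G v ≤ 3) ∧ (¬ OnCycle G v → deg G v ≤ 2)

/-- Length of the unique cycle of a unicyclic graph: number of vertices on a cycle. -/
noncomputable def cycleLength {V : Type*} [Fintype V] (G : SimpleGraph V) : ℕ :=
  Nat.card {v // OnCycle G v}

/-- Value of H_A(CP_{3,n-3}). -/
noncomputable def CPval (n : ℕ) : ℝ :=
  4 * ∑ i ∈ Finset.range (n - 2), harmonicNum (n - i - 2)
    + harmonicNum (n - 3) + 3 * harmonicNum (n - 2) + (6 * (n : ℝ) - 13) / ((n : ℝ) - 2)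

/-!
Two vertices are at distance `1` exactly when they are adjacent, and otherwise at distance at least
`2`. Hence `H_A(G) ≤ (n - 1) m + M₁(G) / 2`, where `m` is the number of edges and `M₁` the sum of
the squared degrees, with equality when the diameter is at most `2`. For a unicyclic graph two
degrees add up to at most `n + 1`, and the convexity of `d ↦ d²` then bounds `M₁` by `n² - n + 6`,
a value attained exactly when some vertex is adjacent to all others. The only such graph is a
triangle with `n - 3` leaves at one of its vertices, which is a cycle-star.
-/

/-- The first Zagreb index `M₁(G)`, which governs `HA` on graphs of diameter at most two. -/
noncomputable def firstZagreb {V : Type*} [Fintype V] (G : SimpleGraph V) : ℕ :=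
  ∑ v, deg G v ^ 2

/-- The reciprocal transmission `∑_{v ≠ u} 1 / d(u, v)` of a vertex, whose degree-weighted sum is
`HA`. The summand `v = u` is kept, since `G.dist u u = 0` and `0⁻¹ = 0`; for the same reason
vertices in other components contribute nothing. -/
noncomputable def reciprocalTransmission {V : Type*} [Fintype V] (G : SimpleGraph V) (u : V) : ℝ :=
  ∑ v, (G.dist u v : ℝ)⁻¹

lemma sum_sq_add_card_mul_le {ι R : Type*} [CommRing R] [LinearOrder R] [IsStrictOrderedRing R]
    (s : Finset ι) (f : ι → R) {a b : R} (ha : ∀ i ∈ s, a ≤ f i) (hb : ∀ i ∈ s, f i ≤ b) :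
    ∑ i ∈ s, f i ^ 2 + #s * (a * b) ≤ (a + b) * ∑ i ∈ s, f i := by
  have pointwise : ∀ i ∈ s, f i ^ 2 + a * b ≤ (a + b) * f i := fun i hi => by
    linarith [mul_nonneg (sub_nonneg.2 (ha i hi)) (sub_nonneg.2 (hb i hi))]
  simpa [sum_add_distrib, mul_sum] using sum_le_sum pointwise

section Degree

variable {V : Type*} [Fintype V] (G : SimpleGraph V)

lemma deg_eq_degree [DecidableRel G.Adj] (v : V) : deg G v = G.degree v := by
  rw [deg, ← G.card_neighborSet_eq_degree, ← Nat.card_eq_fintype_card]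
  rfl

lemma sum_deg : ∑ v, deg G v = 2 * Nat.card G.edgeSet := by
  classical
  simp_rw [deg_eq_degree]
  rw [G.sum_degrees_eq_twice_card_edges, Nat.card_eq_fintype_card, ← edgeFinset_card]

lemma deg_lt_card (v : V) : deg G v < Fintype.card V := by
  classical
  exact deg_eq_degree G v ▸ G.degree_lt_card_verts v

lemma firstZagreb_eq_sq_add_sum_erase [DecidableEq V] (x : V) :
    firstZagreb G = deg G x ^ 2 + ∑ v ∈ univ.erase x, deg G v ^ 2 :=
  (add_sum_erase _ _ (mem_univ x)).symm

variable {G}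

lemma deg_add_one_eq_card_iff_isUniversal {x : V} :
    deg G x + 1 = Fintype.card V ↔ G.IsUniversal x := by
  classical
  have := deg_lt_card G x
  rw [← G.degree_eq_card_sub_one, ← deg_eq_degree]
  omega

lemma deg_add_deg_le {u v : V} (huv : u ≠ v) :
    deg G u + deg G v ≤ Nat.card G.edgeSet + 1 := by
  classical
  rw [deg_eq_degree, deg_eq_degree, ← G.card_incidenceFinset_eq_degree,
    ← G.card_incidenceFinset_eq_degree, Nat.card_eq_fintype_card, ← edgeFinset_card,
    ← card_union_add_card_inter]
  have union_subset_edges : G.incidenceFinset u ∪ G.incidenceFinset v ⊆ G.edgeFinset :=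
    union_subset (G.incidenceFinset_subset u) (G.incidenceFinset_subset v)
  have inter_subset_singleton : G.incidenceFinset u ∩ G.incidenceFinset v ⊆ {s(u, v)} := by
    simpa [← coe_subset] using G.incidenceSet_inter_incidenceSet_subset huv
  exact add_le_add (card_le_card union_subset_edges)
    (card_le_card inter_subset_singleton |>.trans_eq (card_singleton _))

lemma firstZagreb_le_mul_sum_deg {k : ℕ} (hk : ∀ v, deg G v ≤ k) :
    firstZagreb G ≤ k * ∑ v, deg G v := by
  rw [firstZagreb, mul_sum]
  exact sum_le_sum fun v _ => sq (deg G v) ▸ Nat.mul_le_mul_right _ (hk v)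

end Degree

section HararyIndex

variable {V : Type*} [Fintype V] {G : SimpleGraph V}

lemma HA_eq_sum_deg_mul_reciprocalTransmission :
    HA G = ∑ u, deg G u * reciprocalTransmission G u := by
  classical
  have summand (u v : V) :
      (if u = v then 0 else ((deg G u + deg G v : ℕ) : ℝ) / G.dist u v) =
        deg G u * (G.dist u v : ℝ)⁻¹ + deg G v * (G.dist v u : ℝ)⁻¹ := by
    split_ifs with huv
    · simp [huv]
    · rw [G.dist_comm (u := v), Nat.cast_add]
      ring
  simp_rw [HA, summand, sum_add_distrib]
  rw [sum_comm (f := fun u v => (deg G v : ℝ) * (G.dist v u : ℝ)⁻¹)]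
  simp_rw [reciprocalTransmission, mul_sum]
  ring

lemma sum_ite_ne_add_ite_adj [DecidableEq V] [DecidableRel G.Adj] (u : V) :
    ∑ v, ((if u ≠ v then 1 else 0) + if G.Adj u v then 1 else 0 : ℝ) / 2 =
      (Fintype.card V - 1 + deg G u) / 2 := by
  have card_adj : ∑ v, (if G.Adj u v then 1 else 0 : ℝ) = deg G u := by
    rw [deg_eq_degree, ← G.card_neighborFinset_eq_degree, neighborFinset_eq_filter, sum_boole]
  have card_ne : ∑ v, (if u ≠ v then 1 else 0 : ℝ) = Fintype.card V - 1 := by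
    rw [sum_boole, filter_ne, cast_card_erase_of_mem (mem_univ u), card_univ]
  rw [← sum_div, sum_add_distrib, card_adj, card_ne]

variable (G) in
lemma reciprocalTransmission_le (u : V) :
    reciprocalTransmission G u ≤ (Fintype.card V - 1 + deg G u) / 2 := by
  classical
  rw [← sum_ite_ne_add_ite_adj]
  refine sum_le_sum fun v _ => ?_
  by_cases huv : u = v
  · simp [huv]
  by_cases hadj : G.Adj u v
  · simp [huv, hadj, dist_eq_one_iff_adj.2 hadj]
  have dist_ne_one : G.dist u v ≠ 1 := fun hd => hadj (dist_eq_one_iff_adj.1 hd)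
  rcases (by omega : G.dist u v = 0 ∨ 2 ≤ G.dist u v) with hd | hd
  · simp [hd, huv, hadj]
  · simpa [huv, hadj] using inv_anti₀ two_pos (Nat.ofNat_le_cast.2 hd : (2 : ℝ) ≤ G.dist u v)

lemma reciprocalTransmission_eq (hG : G.Connected) {u : V} (hu : ∀ v, G.dist u v ≤ 2) :
    reciprocalTransmission G u = (Fintype.card V - 1 + deg G u) / 2 := by
  classical
  rw [← sum_ite_ne_add_ite_adj]
  refine sum_congr rfl fun v _ => ?_
  by_cases huv : u = v
  · simp [huv]
  by_cases hadj : G.Adj u v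
  · simp [huv, hadj, dist_eq_one_iff_adj.2 hadj]
  have dist_eq_two : G.dist u v = 2 := (hu v).antisymm (hG.one_lt_dist_of_ne_of_not_adj huv hadj)
  simp [huv, hadj, dist_eq_two]

variable (G) in
lemma sum_deg_mul_card_sub_one_add_deg :
    ∑ u, (deg G u : ℝ) * ((Fintype.card V - 1 + deg G u) / 2) =
      (Fintype.card V - 1) * Nat.card G.edgeSet + firstZagreb G / 2 := by
  have handshake : ∑ u, (deg G u : ℝ) = 2 * Nat.card G.edgeSet := by exact_mod_cast sum_deg G
  calc ∑ u, (deg G u : ℝ) * ((Fintype.card V - 1 + deg G u) / 2)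
      = ∑ u, ((Fintype.card V - 1) / 2 * (deg G u : ℝ) + deg G u ^ 2 / 2) := by
        congr! 1; ring
    _ = (Fintype.card V - 1) * Nat.card G.edgeSet + firstZagreb G / 2 := by
        rw [sum_add_distrib, ← mul_sum, ← sum_div, handshake, firstZagreb]
        push_cast
        ring

variable (G) in
lemma HA_le : HA G ≤ (Fintype.card V - 1) * Nat.card G.edgeSet + firstZagreb G / 2 := by
  rw [HA_eq_sum_deg_mul_reciprocalTransmission, ← sum_deg_mul_card_sub_one_add_deg]
  gcongr with u
  exact reciprocalTransmission_le G u

lemma HA_eq_of_dist_le_two (hG : G.Connected) (hdist : ∀ u v, G.dist u v ≤ 2) :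
    HA G = (Fintype.card V - 1) * Nat.card G.edgeSet + firstZagreb G / 2 := by
  simp_rw [HA_eq_sum_deg_mul_reciprocalTransmission, ← sum_deg_mul_card_sub_one_add_deg,
    reciprocalTransmission_eq hG (hdist _)]

end HararyIndex

section UniversalVertex

variable {V : Type*} {G : SimpleGraph V}

lemma dist_le_two_of_isUniversal {x : V} (hx : G.IsUniversal x) (u v : V) : G.dist u v ≤ 2 := by
  have dist_center_le (w : V) : G.dist x w ≤ 1 := by
    rcases eq_or_ne x w with rfl | hw
    · simp
    · exact (dist_eq_one_iff_adj.2 (hx hw)).le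
  calc G.dist u v ≤ G.dist u x + G.dist x v := (Connected.of_isUniversal hx).dist_triangle
    _ ≤ 1 + 1 := add_le_add (G.dist_comm ▸ dist_center_le u) (dist_center_le v)

lemma onCycle_of_triangle {a b c : V} (hab : G.Adj a b) (hbc : G.Adj b c) (hca : G.Adj c a) :
    OnCycle G a := by
  refine ⟨.cons hab (.cons hbc (.cons hca .nil)), ?_⟩
  simp [Walk.cons_isCycle_iff, Walk.isPath_def, hab.ne, hab.ne', hbc.ne, hca.ne, hca.ne']

lemma exists_adj_ne_of_two_le_deg [Fintype V] {v : V} (hv : 2 ≤ deg G v) (x : V) :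
    ∃ w, G.Adj v w ∧ w ≠ x := by
  classical
  rw [deg_eq_degree, ← G.card_neighborFinset_eq_degree] at hv
  simpa using exists_mem_ne hv x

end UniversalVertex

namespace Unicyclic

variable {V : Type*} [Fintype V] {G : SimpleGraph V}

lemma sum_deg (hG : Unicyclic G) : ∑ v, deg G v = 2 * Fintype.card V := by
  rw [_root_.sum_deg, hG.2]

lemma exists_two_le_deg (hG : Unicyclic G) : ∃ v, 2 ≤ deg G v := by
  have := hG.1.nonempty
  have : ∑ _v : V, 1 < ∑ v, deg G v := by
    simp [hG.sum_deg, Fintype.card_pos]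
  obtain ⟨v, -, hv⟩ := exists_lt_of_sum_lt this
  exact ⟨v, hv⟩

lemma three_le_card (hG : Unicyclic G) : 3 ≤ Fintype.card V := by
  obtain ⟨v, hv⟩ := hG.exists_two_le_deg
  exact hv.trans_lt (deg_lt_card G v)

lemma one_le_deg (hG : Unicyclic G) (v : V) : 1 ≤ deg G v := by
  classical
  have : Nontrivial V := Fintype.one_lt_card_iff_nontrivial.1 (by have := hG.three_le_card; omega)
  exact deg_eq_degree G v ▸ hG.1.preconnected.degree_pos_of_nontrivial v

lemma deg_add_deg_le (hG : Unicyclic G) {u v : V} (huv : u ≠ v) :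
    deg G u + deg G v ≤ Fintype.card V + 1 :=
  hG.2 ▸ _root_.deg_add_deg_le huv

lemma deg_add_sum_erase [DecidableEq V] (hG : Unicyclic G) (x : V) :
    deg G x + ∑ v ∈ univ.erase x, deg G v = 2 * Fintype.card V :=
  (add_sum_erase _ _ (mem_univ x)).trans hG.sum_deg

lemma isCycleStar_of_isUniversal (hG : Unicyclic G) {x : V} (hx : G.IsUniversal x) :
    IsCycleStar G := by
  classical
  refine ⟨hG, fun v hv => ?_⟩
  rcases eq_or_ne v x with rfl | hvx
  · have card_lt_sum : ∑ _u ∈ univ.erase v, 1 < ∑ u ∈ univ.erase v, deg G u := by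
      have total := hG.deg_add_sum_erase v
      have deg_center := deg_add_one_eq_card_iff_isUniversal.2 hx
      rw [← card_eq_sum_ones, card_erase_of_mem (mem_univ v), card_univ]
      omega
    obtain ⟨u, hu, hdeg⟩ := exists_lt_of_sum_lt card_lt_sum
    obtain ⟨w, huw, hwv⟩ := exists_adj_ne_of_two_le_deg hdeg v
    exact onCycle_of_triangle (hx (ne_of_mem_erase hu).symm) huw (hx hwv.symm).symm
  · obtain ⟨w, hvw, hwx⟩ := exists_adj_ne_of_two_le_deg hv x
    exact onCycle_of_triangle hvw (hx hwx.symm).symm (hx hvx.symm)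

/-- The other degrees lie in `[1, n + 1 - deg x]`, where `d ↦ d²` is below its chord. The product
on the left is what this bound gains over `n² - n + 6`; it vanishes when `deg x = n - 1`. -/
lemma firstZagreb_add_mul_le (hG : Unicyclic G) (x : V) :
    (firstZagreb G + Fintype.card V + (Fintype.card V - 1 - deg G x) * (2 * deg G x - 5) : ℤ) ≤
      Fintype.card V ^ 2 + 6 := by
  classical
  have others := sum_sq_add_card_mul_le (univ.erase x) (fun v => (deg G v : ℤ))
    (a := 1) (b := Fintype.card V + 1 - deg G x)
    (fun v _ => by exact_mod_cast hG.one_le_deg v)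
    (fun v hv => by have := hG.deg_add_deg_le (ne_of_mem_erase hv); omega)
  have total : (∑ v ∈ univ.erase x, (deg G v : ℤ)) = 2 * Fintype.card V - deg G x :=
    eq_sub_of_add_eq' (by exact_mod_cast hG.deg_add_sum_erase x)
  have squares : (firstZagreb G : ℤ) = deg G x ^ 2 + ∑ v ∈ univ.erase x, (deg G v : ℤ) ^ 2 := by
    exact_mod_cast firstZagreb_eq_sq_add_sum_erase G x
  have card_others : (#(univ.erase x) : ℤ) = Fintype.card V - 1 := by
    rw [cast_card_erase_of_mem (mem_univ x), card_univ]
  rw [card_others, total] at others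
  linarith

lemma firstZagreb_add_card_lt (hG : Unicyclic G) (h : ∀ x, ¬ G.IsUniversal x) :
    firstZagreb G + Fintype.card V < Fintype.card V ^ 2 + 6 := by
  have deg_lt (v : V) : deg G v + 1 < Fintype.card V :=
    lt_of_le_of_ne (deg_lt_card G v) (deg_add_one_eq_card_iff_isUniversal.not.2 (h v))
  by_cases! hlarge : ∃ x, 3 ≤ deg G x
  · obtain ⟨x, hx⟩ := hlarge
    have gap_pos : (0 : ℤ) < (Fintype.card V - 1 - deg G x) * (2 * deg G x - 5) :=
      mul_pos (by have := deg_lt x; omega) (by omega)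
    have := hG.firstZagreb_add_mul_le x
    zify
    linarith
  · have four_le_card : 4 ≤ Fintype.card V := by
      obtain ⟨v, hv⟩ := hG.exists_two_le_deg
      have := deg_lt v
      omega
    have firstZagreb_le : firstZagreb G ≤ 2 * (2 * Fintype.card V) :=
      hG.sum_deg ▸ firstZagreb_le_mul_sum_deg fun v => Nat.le_of_lt_succ (hlarge v)
    nlinarith

lemma firstZagreb_add_card_eq (hG : Unicyclic G) {x : V} (hx : G.IsUniversal x) :
    firstZagreb G + Fintype.card V = Fintype.card V ^ 2 + 6 := by
  classical
  have deg_center := deg_add_one_eq_card_iff_isUniversal.2 hx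
  have deg_le_two (v : V) (hv : v ≠ x) : deg G v ≤ 2 := by
    have := hG.deg_add_deg_le hv
    omega
  have others : ∑ v ∈ univ.erase x, (deg G v ^ 2 + 2) = ∑ v ∈ univ.erase x, 3 * deg G v := by
    refine sum_congr rfl fun v hv => ?_
    have := deg_le_two v (ne_of_mem_erase hv)
    have := hG.one_le_deg v
    interval_cases deg G v <;> rfl
  have total := hG.deg_add_sum_erase x
  rw [sum_add_distrib, ← mul_sum, sum_const, card_erase_of_mem (mem_univ x), card_univ,
    smul_eq_mul, ← deg_center, Nat.add_sub_cancel] at others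
  rw [← deg_center] at total ⊢
  rw [firstZagreb_eq_sq_add_sum_erase G x]
  linarith

lemma HA_lt (hG : Unicyclic G) (h : ∀ x, ¬ G.IsUniversal x) :
    HA G < (3 * Fintype.card V ^ 2 - 3 * Fintype.card V + 6) / 2 := by
  have upper := HA_le G
  have : (firstZagreb G + Fintype.card V : ℝ) < Fintype.card V ^ 2 + 6 := by
    exact_mod_cast hG.firstZagreb_add_card_lt h
  rw [hG.2] at upper
  linarith

lemma HA_eq_of_isUniversal (hG : Unicyclic G) {x : V} (hx : G.IsUniversal x) :
    HA G = (3 * Fintype.card V ^ 2 - 3 * Fintype.card V + 6) / 2 := by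
  have : (firstZagreb G + Fintype.card V : ℝ) = Fintype.card V ^ 2 + 6 := by
    exact_mod_cast hG.firstZagreb_add_card_eq hx
  rw [HA_eq_of_dist_le_two hG.1 (dist_le_two_of_isUniversal hx), hG.2]
  linarith

end Unicyclic

lemma unicyclic_sup_edge {V : Type*} [Fintype V] {T : SimpleGraph V} (hT : T.IsTree) {s t : V}
    (hst : s ≠ t) (hadj : ¬ T.Adj s t) : Unicyclic (T ⊔ edge s t) := by
  classical
  refine ⟨hT.connected.mono le_sup_left, ?_⟩
  rw [Nat.card_eq_fintype_card, ← edgeFinset_card, T.card_edgeFinset_sup_edge hadj hst,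
    hT.card_edgeFinset]

lemma cycleStar3_eq_starGraph_sup_edge {n : ℕ} (hn : 3 ≤ n) :
    cycleStar3 n = starGraph ⟨0, by omega⟩ ⊔ edge ⟨1, by omega⟩ ⟨2, by omega⟩ := by
  ext i j
  simp only [cycleStar3, fromRel_adj, sup_adj, starGraph_adj, edge_adj, ne_eq, Fin.ext_iff]
  omega

lemma unicyclic_cycleStar3 {n : ℕ} (hn : 3 ≤ n) : Unicyclic (cycleStar3 n) := by
  rw [cycleStar3_eq_starGraph_sup_edge hn]
  exact unicyclic_sup_edge (isTree_starGraph _) (by simp) (by simp)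

lemma isUniversal_cycleStar3 {n : ℕ} (hn : 3 ≤ n) :
    (cycleStar3 n).IsUniversal ⟨0, by omega⟩ := by
  rw [cycleStar3_eq_starGraph_sup_edge hn]
  exact fun _ hv => Or.inl (starGraph_center_adj hv)

theorem stmt12_general {V : Type*} [Fintype V] {G : SimpleGraph V} {n : ℕ}
    (hn : Fintype.card V = n) (hG : Unicyclic G) (h : ∀ x, ¬ G.IsUniversal x) :
    IsCycleStar (cycleStar3 n) ∧ HA G < HA (cycleStar3 n) := by
  have hthree : 3 ≤ n := hn ▸ hG.three_le_card
  have hU := unicyclic_cycleStar3 hthree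
  have hcenter := isUniversal_cycleStar3 hthree
  refine ⟨hU.isCycleStar_of_isUniversal hcenter, ?_⟩
  rw [hU.HA_eq_of_isUniversal hcenter, Fintype.card_fin, ← hn]
  exact hG.HA_lt h

theorem stmt12 (n : ℕ) (G : SimpleGraph (Fin n)) (hG : Unicyclic G)
    (h : ¬ IsCycleStar G) :
    ∃ G' : SimpleGraph (Fin n), IsCycleStar G' ∧ HA G < HA G' :=
  ⟨cycleStar3 n, stmt12_general (Fintype.card_fin n) hG fun _ hx =>
    h (hG.isCycleStar_of_isUniversal hx)⟩
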